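/- arXiv:2410.04413 — 2 statements merged into one kernel-verified Lean document; each statement's English description precedes it below -/
import Mathlib

section
/- Let G be a connected d-regular graph of even order, where d ≥ 3, and let λ₂(G) be the second largest eigenvalue of its adjacency matrix. Then G contains ⌊(2/3)(d − λ₂(G))⌋ pairwise edge-disjoint perfect matchings. -/
open Classical in
/-- The adjacency matrix of a finite simple graph (over `ℝ`) is Hermitian. -/
lemma adjMatrix_isHermitian {V : Type*} [Fintype V] (G : SimpleGraph V) [DecidableRel G.Adj] :
    (G.adjMatrix ℝ).IsHermitian := by
  ext i j
  simp [Matrix.conjTranspose_apply, SimpleGraph.adj_comm]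

open Classical in
/-- The multiset of adjacency eigenvalues (with multiplicity) of a finite simple graph. -/
noncomputable def adjEigenvalues {V : Type*} [Fintype V] (G : SimpleGraph V) : Multiset ℝ :=
  Finset.univ.val.map (adjMatrix_isHermitian G).eigenvalues

open Classical in
/-- `lambda2 G` is the second largest adjacency eigenvalue (with multiplicity) of `G`:
the second entry of the list of all eigenvalues sorted in decreasing order, i.e. the entry at
position `|V| - 2` (0-indexed) of the increasingly sorted list. -/
noncomputable def lambda2 {V : Type*} [Fintype V] (G : SimpleGraph V) : ℝ :=
  ((adjEigenvalues G).sort (· ≤ ·)).getD (Fintype.card V - 2) 0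

lemma exists_le_sorted {V : Type*} [Fintype V] (f : V → ℝ) (hn : 2 ≤ Fintype.card V) :
    ∃ i0, ∀ i, i ≠ i0 →
      f i ≤ ((Finset.univ.val.map f).sort (· ≤ ·)).getD (Fintype.card V - 2) 0 := by
  classical
  set l := (Finset.univ.val.map f).sort (· ≤ ·) with hl
  have hlen : l.length = Fintype.card V := by simp [hl]
  have hs : l.Pairwise (· ≤ ·) := Multiset.pairwise_sort _ _
  have hlt : Fintype.card V - 2 < l.length := by omega
  rw [List.getD_eq_getElem _ _ hlt]
  set t := l[Fintype.card V - 2] with ht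
  have hcount : l.countP (fun x => decide (t < x)) ≤ 1 := by
    rw [← List.take_append_drop (Fintype.card V - 1) l, List.countP_append]
    have h1 : (l.take (Fintype.card V - 1)).countP (fun x => decide (t < x)) = 0 := by
      rw [List.countP_eq_zero]
      intro a ha
      obtain ⟨i, hi, rfl⟩ := List.mem_take_iff_getElem.1 ha
      have : l[i]'(by omega) ≤ t := by
        rw [ht]
        rcases Nat.lt_or_ge i (Fintype.card V - 2) with h | h
        · exact List.pairwise_iff_getElem.1 hs i _ _ _ h
        · have : i = Fintype.card V - 2 := by omega
          subst this; rfl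
      simpa using this
    have h2 : (l.drop (Fintype.card V - 1)).countP (fun x => decide (t < x)) ≤ 1 := by
      refine List.countP_le_length.trans ?_
      rw [List.length_drop]; omega
    omega
  have hc2 : (Finset.univ.filter (fun i => t < f i)).card ≤ 1 := by
    have : l.countP (fun x => decide (t < x)) = (Finset.univ.filter (fun i => t < f i)).card := by
      rw [← Multiset.coe_countP, hl, Multiset.sort_eq, Multiset.countP_map]
      simp [Finset.card_def, Finset.filter_val]
    omega
  rw [Finset.card_le_one] at hc2
  by_cases h : ∃ i0, t < f i0
  · obtain ⟨i0, h0⟩ := h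
    refine ⟨i0, fun i hi => ?_⟩
    by_contra hlt
    exact hi (hc2 i (by simpa using hlt) i0 (by simpa using h0))
  · push Not at h
    have : Nonempty V := Fintype.card_pos_iff.1 (by omega)
    exact ⟨this.some, fun i _ => h i⟩

open Classical in
/-- Rayleigh bound on the orthogonal complement of the all-one vector. -/
lemma rayleigh_le {V : Type*} [Fintype V] (G : SimpleGraph V) (d : ℕ)
    (hreg : ∀ v, (Finset.univ.filter (fun w => G.Adj v w)).card = d)
    (hn : 2 ≤ Fintype.card V) (hlam : lambda2 G < d) (x : V → ℝ) (hx : ∑ v, x v = 0) :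
    ∑ v, x v * ((G.adjMatrix ℝ).mulVec x) v ≤ lambda2 G * ∑ v, x v ^ 2 := by
  set A := G.adjMatrix ℝ with hA
  have hH : A.IsHermitian := adjMatrix_isHermitian G
  obtain ⟨i0, hi0⟩ := exists_le_sorted hH.eigenvalues hn
  have hi0 : ∀ i, i ≠ i0 → hH.eigenvalues i ≤ lambda2 G := hi0
  set b := hH.eigenvectorBasis with hb
  have hT := Matrix.isSymmetric_toEuclideanLin_iff.mpr hH
  have hev : ∀ i, A.toEuclideanLin (b i) = hH.eigenvalues i • b i := by
    intro i
    have := hH.mulVec_eigenvectorBasis i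
    ext j
    simpa [Matrix.toLpLin_apply] using congrFun this j
  have hinn : ∀ (y : EuclideanSpace ℝ V) i,
      inner ℝ (b i) (A.toEuclideanLin y) = hH.eigenvalues i * inner ℝ (b i) y := by
    intro y i
    rw [← hT, hev, inner_smul_left]; simp
  let one : EuclideanSpace ℝ V := WithLp.toLp 2 (fun _ => 1)
  have hone : A.toEuclideanLin one = (d : ℝ) • one := by
    ext j
    simp [Matrix.toLpLin_apply, one, hA, SimpleGraph.adjMatrix_mulVec_apply, ← hreg j,
      SimpleGraph.neighborFinset_eq_filter]
  have hort : ∀ i, i ≠ i0 → inner ℝ (b i) one = 0 := by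
    intro i hi
    have h1 := hinn one i
    rw [hone, inner_smul_right] at h1
    have h2 := hi0 i hi
    have h3 : ((d : ℝ) - hH.eigenvalues i) * inner ℝ (b i) one = 0 := by linarith
    rcases mul_eq_zero.1 h3 with h | h
    · linarith
    · exact h
  have hone' : one = inner ℝ (b i0) one • b i0 := by
    conv_lhs => rw [← b.sum_repr' one]
    rw [Finset.sum_eq_single i0]
    · intro i _ hi; rw [hort i hi, zero_smul]
    · simp
  let X : EuclideanSpace ℝ V := WithLp.toLp 2 x
  have hXone : inner ℝ one X = 0 := by
    simp [PiLp.inner_apply, one, X, hx]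
  have hne : inner ℝ (b i0) one ≠ 0 := by
    intro h
    rw [h, zero_smul] at hone'
    have := congrArg (fun y : EuclideanSpace ℝ V => y i0) hone'
    simp [one] at this
  have hX0 : inner ℝ (b i0) X = 0 := by
    rw [hone', inner_smul_left] at hXone
    rcases mul_eq_zero.1 hXone with h | h
    · exact absurd (by simpa using h) hne
    · exact h
  have e1 : ∑ v, x v * (A.mulVec x) v = inner ℝ X (A.toEuclideanLin X) := by
    simp [PiLp.inner_apply, X, Matrix.toLpLin_apply, mul_comm]
  have e2 : ∑ v, x v ^ 2 = inner ℝ X X := by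
    rw [PiLp.inner_apply]; simp [X, sq]
  rw [e1, e2, ← b.sum_inner_mul_inner, ← b.sum_inner_mul_inner, Finset.mul_sum]
  refine Finset.sum_le_sum fun i _ => ?_
  rw [hinn, real_inner_comm]
  by_cases hi : i = i0
  · subst hi; rw [hX0]; simp
  · have := hi0 i hi
    nlinarith [mul_self_nonneg (inner ℝ (b i) X)]

open Classical in
/-- Number of edges leaving a set. -/
noncomputable def cutE {V : Type*} [Fintype V] (X : SimpleGraph V) (P : Finset V) : ℕ :=
  ∑ u ∈ P, (Finset.univ.filter (fun v => v ∉ P ∧ X.Adj u v)).card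

open Classical in
lemma cut_bound {V : Type*} [Fintype V] (G : SimpleGraph V) (d : ℕ)
    (hreg : ∀ v, (Finset.univ.filter (fun w => G.Adj v w)).card = d)
    (hn : 2 ≤ Fintype.card V) (P : Finset V) :
    ((d : ℝ) - lambda2 G) * (P.card * (Fintype.card V - P.card)) ≤
      Fintype.card V * cutE G P := by
  have hpn : (P.card : ℝ) ≤ Fintype.card V := by exact_mod_cast P.card_le_univ
  rcases le_or_gt (d : ℝ) (lambda2 G) with hle | hlt
  · have : 0 ≤ (P.card : ℝ) * (Fintype.card V - P.card) := by
      apply mul_nonneg <;> [positivity; linarith]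
    have h2 : (0 : ℝ) ≤ Fintype.card V * cutE G P := by positivity
    nlinarith
  set n : ℝ := (Fintype.card V : ℝ) with hnn
  set p : ℝ := (P.card : ℝ) with hp
  let x : V → ℝ := fun v => n * (if v ∈ P then 1 else 0) - p
  have s1 : ∑ v, (if v ∈ P then (1 : ℝ) else 0) = p := by simp [hp]
  have hx : ∑ v, x v = 0 := by
    simp only [x, Finset.sum_sub_distrib, ← Finset.mul_sum, s1]
    simp [hnn]
  have hsq : ∑ v, x v ^ 2 = n * (p * (n - p)) := by
    have : ∀ v, x v ^ 2 = (n ^ 2 - 2 * n * p) * (if v ∈ P then (1 : ℝ) else 0) + p ^ 2 := by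
      intro v; simp only [x]; split_ifs <;> ring
    simp only [this, Finset.sum_add_distrib, ← Finset.mul_sum, s1]
    simp [← hnn]; ring
  have hA1 : ∀ v, (G.adjMatrix ℝ).mulVec x v =
      n * ((Finset.univ.filter (fun w => w ∈ P ∧ G.Adj v w)).card : ℝ) - d * p := by
    intro v
    rw [SimpleGraph.adjMatrix_mulVec_apply]
    simp only [x, Finset.sum_sub_distrib, ← Finset.mul_sum]
    rw [← hreg v]
    simp only [SimpleGraph.neighborFinset_eq_filter, Finset.sum_boole, Finset.filter_filter,
      Finset.sum_const, nsmul_eq_mul]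
    simp only [and_comm]
  have hR := rayleigh_le G d hreg hn hlt x hx
  rw [hsq] at hR
  have hdeg : ∀ v, ((Finset.univ.filter (fun w => w ∈ P ∧ G.Adj v w)).card : ℝ) =
      d - ((Finset.univ.filter (fun w => w ∉ P ∧ G.Adj v w)).card : ℝ) := by
    intro v
    rw [← hreg v, ← Finset.card_filter_add_card_filter_not (s := Finset.univ.filter (fun w => G.Adj v w)) (fun w => w ∈ P)]
    simp [Finset.filter_filter, and_comm]
  have hq : ∑ v, x v * (G.adjMatrix ℝ).mulVec x v = n * (d * (p * (n - p)) - n * cutE G P) := by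
    have hx0 : ∑ v, x v * (G.adjMatrix ℝ).mulVec x v =
        n * ∑ v ∈ P, (G.adjMatrix ℝ).mulVec x v - p * ∑ v, (G.adjMatrix ℝ).mulVec x v := by
      simp only [x, sub_mul, Finset.sum_sub_distrib, ← Finset.mul_sum, mul_assoc]
      simp
    have hx1 : ∑ v, (G.adjMatrix ℝ).mulVec x v = 0 := by
      have : ∑ v, (G.adjMatrix ℝ).mulVec x v = ∑ v, d * x v := by
        simp only [Matrix.mulVec, dotProduct]
        rw [Finset.sum_comm]
        refine Finset.sum_congr rfl fun w _ => ?_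
        rw [← Finset.sum_mul, ← hreg w]
        simp [SimpleGraph.adjMatrix_apply, SimpleGraph.adj_comm]
      rw [this, ← Finset.mul_sum, hx, mul_zero]
    have hx2 : ∑ v ∈ P, (G.adjMatrix ℝ).mulVec x v = d * p * (n - p) - n * cutE G P := by
      simp only [hA1, hdeg, cutE, mul_sub, Finset.sum_sub_distrib, ← Finset.mul_sum]
      push_cast
      simp [← hp]; ring
    rw [hx0, hx1, hx2]; ring
  rw [hq] at hR
  have hn0 : 0 < n := by rw [hnn]; exact_mod_cast (by omega : 0 < Fintype.card V)
  have : n * (((d : ℝ) - lambda2 G) * (p * (n - p))) ≤ n * (n * cutE G P) := by nlinarith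
  exact le_of_mul_le_mul_left this hn0

open Classical in
lemma tutte_family {V : Type*} [Fintype V] (X : SimpleGraph V)
    (hno : ∀ M : X.Subgraph, ¬ M.IsPerfectMatching) (heven : Even (Fintype.card V)) :
    ∃ (S : Finset V) (F : Finset (Finset V)), S.card + 2 ≤ F.card ∧
      (∀ Q ∈ F, Q.Nonempty ∧ Disjoint Q S ∧ ∀ u ∈ Q, ∀ v, X.Adj u v → v ∈ Q ∨ v ∈ S) ∧
      (F : Set (Finset V)).PairwiseDisjoint id := by
  obtain ⟨U, hU⟩ := SimpleGraph.exists_isTutteViolator hno (by rwa [Nat.card_eq_fintype_card])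
  unfold SimpleGraph.IsTutteViolator at hU
  set D := ((⊤ : X.Subgraph).deleteVerts U).coe with hD
  have hpar := SimpleGraph.odd_ncard_oddComponents D
  have hcard : Nat.card ((⊤ : X.Subgraph).deleteVerts U).verts + U.ncard = Fintype.card V := by
    rw [Nat.card_coe_set_eq, ← Nat.card_eq_fintype_card, ← Set.ncard_univ]
    have : ((⊤ : X.Subgraph).deleteVerts U).verts = Set.univ \ U := by simp
    rw [this]
    exact Set.ncard_sdiff_add_ncard_of_subset (Set.subset_univ U)
  have hU2 : U.ncard + 2 ≤ D.oddComponents.ncard := by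
    by_contra hlt
    have h1 : D.oddComponents.ncard = U.ncard + 1 := by omega
    rw [h1] at hpar
    rw [← hcard] at heven
    rcases Nat.even_or_odd U.ncard with h | h
    · have h2 := hpar.1 h.add_one
      exact (Nat.not_even_iff_odd.2 (h2.add_even h)) heven
    · have h2 : ¬ Odd (U.ncard + 1) := Nat.not_odd_iff_even.2 h.add_one
      have h3 := Nat.not_odd_iff_even.1 (fun h' => h2 (hpar.2 h'))
      exact (Nat.not_even_iff_odd.2 (h3.add_odd h)) heven
  let q : D.ConnectedComponent → Finset V := fun c =>
    (Subtype.val '' c.supp).toFinset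
  have hq : ∀ c v, v ∈ q c ↔ ∃ h : v ∈ ((⊤ : X.Subgraph).deleteVerts U).verts,
      D.connectedComponentMk ⟨v, h⟩ = c := by
    intro c v
    simp only [q, Set.mem_toFinset, Set.mem_image, Subtype.exists,
      SimpleGraph.ConnectedComponent.mem_supp_iff, exists_and_right, exists_eq_right]
  have hdis : ∀ c c' v, v ∈ q c → v ∈ q c' → c = c' := by
    intro c c' v h1 h2
    obtain ⟨h, e1⟩ := (hq c v).1 h1
    obtain ⟨h', e2⟩ := (hq c' v).1 h2
    rw [← e1, ← e2]
  have hne : ∀ c, (q c).Nonempty := by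
    intro c
    obtain ⟨⟨v, hv⟩, h⟩ := c.exists_rep
    exact ⟨v, (hq c v).2 ⟨hv, h⟩⟩
  have hinj : Function.Injective q := by
    intro c c' h
    obtain ⟨v, hv⟩ := hne c
    exact hdis c c' v hv (h ▸ hv)
  refine ⟨U.toFinset, D.oddComponents.toFinset.image q, ?_, ?_, ?_⟩
  · rw [Finset.card_image_of_injective _ hinj, ← Set.ncard_eq_toFinset_card',
      ← Set.ncard_eq_toFinset_card']
    exact hU2
  · intro Q hQ
    obtain ⟨c, hc, rfl⟩ := Finset.mem_image.1 hQ
    refine ⟨hne c, ?_, ?_⟩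
    · rw [Finset.disjoint_left]
      intro v hv
      obtain ⟨h, -⟩ := (hq c v).1 hv
      simpa using h.2
    · intro u hu v huv
      obtain ⟨h, e⟩ := (hq c u).1 hu
      by_cases hvU : v ∈ U
      · right; simpa using hvU
      · left
        have hv : v ∈ ((⊤ : X.Subgraph).deleteVerts U).verts := by simpa using hvU
        refine (hq c v).2 ⟨hv, ?_⟩
        rw [← e]
        apply SimpleGraph.ConnectedComponent.sound
        apply SimpleGraph.Adj.reachable
        have hu' : u ∉ U := by simpa using h.2
        simp [hD, hu', hvU, huv.symm]
  · intro Q hQ Q' hQ' hne'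
    obtain ⟨c, hc, rfl⟩ := Finset.mem_image.1 (Finset.mem_coe.1 hQ)
    obtain ⟨c', hc', rfl⟩ := Finset.mem_image.1 (Finset.mem_coe.1 hQ')
    simp only [Function.onFun, id]
    rw [Finset.disjoint_left]
    intro v h1 h2
    exact hne' (by rw [hdis c c' v h1 h2])

lemma pm_involution {V : Type*} (X : SimpleGraph V) (M : X.Subgraph)
    (hM : M.IsPerfectMatching) : ∃ f : V → V, ∀ v, X.Adj v (f v) ∧ f (f v) = v := by
  rw [SimpleGraph.Subgraph.isPerfectMatching_iff] at hM
  choose f hf hu using hM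
  refine ⟨f, fun v => ⟨(hf v).adj_sub, ?_⟩⟩
  exact (hu (f v) v (hf v).symm).symm

open Classical in
lemma cutE_compl_le {V : Type*} [Fintype V] (Y : SimpleGraph V) (Q1 Q2 C : Finset V)
    (hC : ∀ v, v ∈ C ↔ v ∉ Q1 ∧ v ∉ Q2) : cutE Y C ≤ cutE Y Q1 + cutE Y Q2 := by
  have key : ∀ P : Finset V, cutE Y P =
      (Finset.univ.filter (fun p : V × V => p.1 ∈ P ∧ p.2 ∉ P ∧ Y.Adj p.1 p.2)).card := by
    intro P
    unfold cutE
    rw [← Finset.card_sigma]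
    refine Finset.card_bij (fun a _ => (a.1, a.2)) ?_ ?_ ?_
    · intro a ha; simpa using ha
    · rintro ⟨a, b⟩ _ ⟨c, d⟩ _ h; simpa using h
    · rintro ⟨a, b⟩ h; exact ⟨⟨a, b⟩, by simpa using h, rfl⟩
  rw [key C, key Q1, key Q2]
  refine le_trans ?_ (Finset.card_union_le _ _)
  refine Finset.card_le_card_of_injOn Prod.swap ?_ Prod.swap_injective.injOn
  rintro ⟨a, b⟩ h
  simp only [Finset.coe_filter, Finset.mem_univ, true_and, Set.mem_ofPred_eq, hC] at h
  simp only [Prod.swap, Finset.coe_union, Finset.coe_filter, Finset.mem_univ, true_and,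
    Set.mem_union, Set.mem_ofPred_eq]
  obtain ⟨⟨h1, h2⟩, h3, h4⟩ := h
  have := h4.symm
  tauto

open Classical in
lemma tutte_partition {V : Type*} [Fintype V] (X Y : SimpleGraph V)
    (heven : Even (Fintype.card V)) (ρ b : ℕ)
    (hreg : ∀ v, (Finset.univ.filter (fun w => Y.Adj v w)).card = ρ)
    (hb : ∑ u, (Finset.univ.filter (fun v => Y.Adj u v ∧ ¬ X.Adj u v)).card ≤ b)
    (hbρ : b < ρ)
    (hsmall : ∀ P : Finset V, P.Nonempty → 3 * P.card ≤ Fintype.card V → ρ ≤ cutE Y P)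
    (hno : ∀ M : X.Subgraph, ¬ M.IsPerfectMatching) :
    ∃ Q : Finset V, Q.Nonempty ∧ Qᶜ.Nonempty ∧ ∀ u ∈ Q, ∀ v, v ∉ Q → ¬ X.Adj u v := by
  obtain ⟨S, F, hSF, hF, hdisj⟩ := tutte_family X hno heven
  have hsum : ∑ Q ∈ F, cutE Y Q ≤ ρ * S.card + b := by
    have h1 : ∀ Q ∈ F, cutE Y Q ≤ ∑ u ∈ Q, ((S.filter (fun v => Y.Adj u v)).card +
        (Finset.univ.filter (fun v => Y.Adj u v ∧ ¬ X.Adj u v)).card) := by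
      intro Q hQ
      refine Finset.sum_le_sum fun u hu => ?_
      refine le_trans (Finset.card_le_card ?_) (Finset.card_union_le _ _)
      intro v hv
      simp only [Finset.mem_filter, Finset.mem_univ, true_and, Finset.mem_union] at hv ⊢
      by_cases hx : X.Adj u v
      · have := (hF Q hQ).2.2 u hu v hx
        tauto
      · tauto
    refine (Finset.sum_le_sum h1).trans ?_
    have h2 := Finset.sum_biUnion (s := F) (t := id) (f := fun u => ((S.filter (fun v => Y.Adj u v)).card +
        (Finset.univ.filter (fun v => Y.Adj u v ∧ ¬ X.Adj u v)).card)) hdisj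
    simp only [id] at h2
    rw [← h2]
    refine (Finset.sum_le_sum_of_subset (Finset.subset_univ _)).trans ?_
    rw [Finset.sum_add_distrib]
    refine add_le_add ?_ hb
    simp only [Finset.card_filter]
    rw [Finset.sum_comm]
    have h3 : ∀ v ∈ S, ∑ u, (if Y.Adj u v then 1 else 0) = ρ := by
      intro v _
      rw [← hreg v, Finset.card_filter]
      simp only [SimpleGraph.adj_comm]
    rw [Finset.sum_congr rfl h3]
    simp [mul_comm]
  set L := F.filter (fun Q => Fintype.card V < 3 * Q.card) with hL
  have hsplit : ∑ Q ∈ L, cutE Y Q + ρ * (F.card - L.card) ≤ ∑ Q ∈ F, cutE Y Q := by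
    have hLF : L ⊆ F := Finset.filter_subset _ _
    rw [← Finset.sum_sdiff hLF, add_comm, ← Finset.card_sdiff_of_subset hLF]
    refine add_le_add ?_ le_rfl
    rw [mul_comm, ← smul_eq_mul]
    refine Finset.card_nsmul_le_sum _ _ _ ?_
    intro Q hQ
    rw [Finset.mem_sdiff] at hQ
    refine hsmall Q (hF Q hQ.1).1 ?_
    by_contra hlt
    exact hQ.2 (Finset.mem_filter.2 ⟨hQ.1, by omega⟩)
  have hLF : L ⊆ F := Finset.filter_subset _ _
  have hLle : L.card ≤ 2 := by
    by_contra h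
    have h1 : ∑ Q ∈ L, Q.card ≤ Fintype.card V := by
      have := Finset.card_biUnion (s := L) (t := id) (fun x hx y hy hxy =>
        hdisj (hLF hx) (hLF hy) hxy)
      simp only [id] at this
      rw [← this]
      exact Finset.card_le_univ _
    have h2 : L.card • (Fintype.card V + 1) ≤ ∑ Q ∈ L, 3 * Q.card :=
      Finset.card_nsmul_le_sum _ _ _ (fun Q hQ => (Finset.mem_filter.1 hQ).2)
    rw [← Finset.mul_sum, smul_eq_mul] at h2
    nlinarith
  have hL2 : L.card = 2 := by
    by_contra h
    have h1 : S.card + 1 ≤ F.card - L.card := by omega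
    have h2 := Nat.mul_le_mul_left ρ h1
    have h3 : ρ * (S.card + 1) = ρ * S.card + ρ := by ring
    omega
  obtain ⟨Q1, Q2, hne, hLe⟩ := Finset.card_eq_two.1 hL2
  have hQ1 : Q1 ∈ L := by rw [hLe]; simp
  have hQ2 : Q2 ∈ L := by rw [hLe]; simp
  have hd12 : Disjoint Q1 Q2 := hdisj (hLF hQ1) (hLF hQ2) hne
  have hcuts : cutE Y Q1 + cutE Y Q2 ≤ b := by
    have h1 : S.card ≤ F.card - L.card := by omega
    have h2 := Nat.mul_le_mul_left ρ h1
    rw [hLe, Finset.sum_pair hne, ← hLe] at hsplit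
    omega
  have hC : (Q1 ∪ Q2)ᶜ = ∅ := by
    by_contra hCne
    have h1 := cutE_compl_le Y Q1 Q2 (Q1 ∪ Q2)ᶜ (by intro v; simp)
    have h2 := hsmall (Q1 ∪ Q2)ᶜ (Finset.nonempty_iff_ne_empty.2 hCne) (by
      have e1 := (Finset.mem_filter.1 hQ1).2
      have e2 := (Finset.mem_filter.1 hQ2).2
      have e3 := Finset.card_compl_add_card (Q1 ∪ Q2)
      rw [Finset.card_union_of_disjoint hd12] at e3
      omega)
    omega
  have hcov : ∀ v, v ∈ Q1 ∨ v ∈ Q2 := by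
    intro v
    by_contra h
    have : v ∈ (Q1 ∪ Q2)ᶜ := by simpa using h
    rw [hC] at this
    simp at this
  refine ⟨Q1, (hF _ (hLF hQ1)).1, ?_, ?_⟩
  · obtain ⟨v, hv⟩ := (hF _ (hLF hQ2)).1
    exact ⟨v, by simpa using Finset.disjoint_right.1 hd12 hv⟩
  · intro u hu v hv hadj
    rcases (hF _ (hLF hQ1)).2.2 u hu v hadj with h | h
    · exact hv h
    · rcases hcov v with h' | h'
      · exact hv h'
      · exact Finset.disjoint_left.1 (hF _ (hLF hQ2)).2.1 h' h

/-- A finite set of pairwise edge-disjoint perfect matchings, seen as involutions. -/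
def Cfg {V : Type*} (G : SimpleGraph V) (I : Finset (V → V)) : Prop :=
  (∀ f ∈ I, ∀ v, G.Adj v (f v) ∧ f (f v) = v) ∧
    ∀ f ∈ I, ∀ g ∈ I, f ≠ g → ∀ v, f v ≠ g v

/-- The graph left after deleting the matchings. -/
def Res {V : Type*} (G : SimpleGraph V) (I : Finset (V → V)) : SimpleGraph V where
  Adj u v := G.Adj u v ∧ ∀ f ∈ I, f u ≠ v ∧ f v ≠ u
  symm := ⟨fun _ _ h => ⟨h.1.symm, fun f hf => (h.2 f hf).symm⟩⟩
  loopless := ⟨fun _ h => h.1.ne rfl⟩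

/-- `A` is a union of components of `X`. -/
def Closed {V : Type*} (X : SimpleGraph V) (A : Finset V) : Prop :=
  ∀ u ∈ A, ∀ v, v ∉ A → ¬ X.Adj u v

lemma res_adj {V : Type*} {G : SimpleGraph V} {I : Finset (V → V)} (hI : Cfg G I) (u v : V) :
    (Res G I).Adj u v ↔ G.Adj u v ∧ ∀ f ∈ I, f u ≠ v := by
  constructor
  · exact fun h => ⟨h.1, fun f hf => (h.2 f hf).1⟩
  · refine fun h => ⟨h.1, fun f hf => ⟨h.2 f hf, fun h' => h.2 f hf ?_⟩⟩
    rw [← h']; exact (hI.1 f hf v).2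

open Classical in
lemma res_deg {V : Type*} [Fintype V] {G : SimpleGraph V} {I : Finset (V → V)} (hI : Cfg G I)
    (d : ℕ) (hreg : ∀ v, (Finset.univ.filter (fun w => G.Adj v w)).card = d) (u : V) :
    (Finset.univ.filter (fun w => (Res G I).Adj u w)).card + I.card = d := by
  have h1 : (I.image (fun f => f u)).card = I.card := by
    apply Finset.card_image_of_injOn
    intro f hf g hg h
    by_contra hne
    exact hI.2 f hf g hg hne u h
  have h2 : I.image (fun f => f u) ⊆ Finset.univ.filter (fun w => G.Adj u w) := by
    intro w hw
    obtain ⟨f, hf, rfl⟩ := Finset.mem_image.1 hw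
    simpa using (hI.1 f hf u).1
  have h3 : Finset.univ.filter (fun w => (Res G I).Adj u w) =
      Finset.univ.filter (fun w => G.Adj u w) \ I.image (fun f => f u) := by
    ext w
    simp [res_adj hI]
  have h4 := Finset.card_le_card h2
  rw [h3, Finset.card_sdiff_of_subset h2, h1, hreg u]
  rw [h1, hreg u] at h4
  omega

open Classical in
lemma cut_le_of_cover {V : Type*} [Fintype V] (G : SimpleGraph V) (J : Finset (V → V))
    (P : Finset V) (h : ∀ u ∈ P, ∀ v, v ∉ P → G.Adj u v → ∃ f ∈ J, f u = v) :
    cutE G P ≤ J.card * P.card := by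
  unfold cutE
  rw [mul_comm, ← smul_eq_mul]
  refine Finset.sum_le_card_nsmul _ _ _ fun u hu => ?_
  refine le_trans (Finset.card_le_card ?_) (Finset.card_image_le (s := J) (f := fun f => f u))
  intro v hv
  simp only [Finset.mem_filter, Finset.mem_univ, true_and] at hv
  simpa using h u hu v hv.1 hv.2

open Classical in
lemma cut_le_res {V : Type*} [Fintype V] {G : SimpleGraph V} {I : Finset (V → V)}
    (hI : Cfg G I) (P : Finset V) :
    cutE G P ≤ cutE (Res G I) P + I.card * P.card := by
  unfold cutE
  have : I.card * P.card = ∑ u ∈ P, I.card := by simp [mul_comm]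
  rw [this, ← Finset.sum_add_distrib]
  refine Finset.sum_le_sum fun u hu => ?_
  refine le_trans ?_ (add_le_add le_rfl (Finset.card_image_le (s := I) (f := fun f => f u)))
  refine le_trans (Finset.card_le_card ?_) (Finset.card_union_le _ _)
  intro v hv
  simp only [Finset.mem_filter, Finset.mem_univ, true_and, Finset.mem_union, res_adj hI,
    Finset.mem_image] at hv ⊢
  by_cases h : ∃ f ∈ I, f u = v
  · exact Or.inr h
  · push Not at h
    exact Or.inl ⟨hv.1, hv.2, h⟩

open Classical in
lemma cut_reg {V : Type*} [Fintype V] (Y : SimpleGraph V) (ρ : ℕ)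
    (hreg : ∀ v, (Finset.univ.filter (fun w => Y.Adj v w)).card = ρ) (P : Finset V) :
    P.card * (ρ + 1) ≤ cutE Y P + P.card * P.card := by
  have h1 : P.card * (ρ + 1) = ∑ u ∈ P, (ρ + 1) := by simp
  have h2 : P.card * P.card = ∑ u ∈ P, P.card := by simp
  unfold cutE
  rw [h1, h2, ← Finset.sum_add_distrib]
  refine Finset.sum_le_sum fun u hu => ?_
  have h3 : (Finset.univ.filter (fun w => Y.Adj u w)) ⊆
      (Finset.univ.filter (fun v => v ∉ P ∧ Y.Adj u v)) ∪ P.erase u := by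
    intro v hv
    simp only [Finset.mem_filter, Finset.mem_univ, true_and, Finset.mem_union,
      Finset.mem_erase] at hv ⊢
    have := hv.ne'
    tauto
  have h4 := (Finset.card_le_card h3).trans (Finset.card_union_le _ _)
  rw [hreg, Finset.card_erase_of_mem hu] at h4
  have : 0 < P.card := Finset.card_pos.2 ⟨u, hu⟩
  omega

/-- The consequence of the spectral bound in use. -/
def Spec {V : Type*} [Fintype V] (G : SimpleGraph V) (k : ℕ) : Prop :=
  ∀ P : Finset V, 3 * (k + 1) * (P.card * (Fintype.card V - P.card)) ≤
    2 * Fintype.card V * cutE G P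

lemma spec_weak {V : Type*} [Fintype V] {G : SimpleGraph V} {k : ℕ} (h : Spec G k)
    (P : Finset V) (hP : P.Nonempty) (h3 : 3 * P.card ≤ Fintype.card V) :
    (k + 1) * P.card ≤ cutE G P := by
  have h1 := h P
  have h0 : 0 < P.card := hP.card_pos
  obtain ⟨m, hm⟩ := Nat.exists_eq_add_of_le (P.card_le_univ)
  rw [hm] at h1 h3
  rw [Nat.add_sub_cancel_left] at h1
  generalize P.card = p at *
  generalize cutE G P = c at *
  have h2 : (k + 1) * p * (2 * (p + m)) ≤ c * (2 * (p + m)) := by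
    have : (k + 1) * p * (2 * (p + m)) ≤ (k + 1) * p * (3 * m) :=
      Nat.mul_le_mul_left _ (by omega)
    nlinarith
  exact Nat.le_of_mul_le_mul_right h2 (by omega)

lemma spec_strict {V : Type*} [Fintype V] {G : SimpleGraph V} {k : ℕ} (h : Spec G k)
    (P : Finset V) (hP : P.Nonempty) (h3 : 3 * P.card < Fintype.card V) :
    (k + 1) * P.card < cutE G P := by
  have h1 := h P
  have h0 : 0 < P.card := hP.card_pos
  obtain ⟨m, hm⟩ := Nat.exists_eq_add_of_le (P.card_le_univ)
  rw [hm] at h1 h3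
  rw [Nat.add_sub_cancel_left] at h1
  generalize P.card = p at *
  generalize cutE G P = c at *
  have h2 : (k + 1) * p * (2 * (p + m)) < c * (2 * (p + m)) := by
    have : (k + 1) * p * (2 * (p + m)) < (k + 1) * p * (3 * m) :=
      Nat.mul_lt_mul_of_pos_left (by omega) (by positivity)
    nlinarith
  exact Nat.lt_of_mul_lt_mul_right h2

open Classical in
lemma res_small {V : Type*} [Fintype V] {G : SimpleGraph V} {k : ℕ} (h : Spec G k)
    {I : Finset (V → V)} (hI : Cfg G I) (hk : I.card ≤ k) (ρ : ℕ)
    (hreg : ∀ v, (Finset.univ.filter (fun w => (Res G I).Adj v w)).card = ρ)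
    (P : Finset V) (hP : P.Nonempty) (h3 : 3 * P.card ≤ Fintype.card V) :
    ρ ≤ cutE (Res G I) P := by
  have h1 := spec_weak h P hP h3
  have h2 := cut_le_res hI P
  have h4 := cut_reg (Res G I) ρ hreg P
  have h0 : 0 < P.card := hP.card_pos
  have h5 : I.card * P.card ≤ k * P.card := Nat.mul_le_mul_right _ hk
  have h6 : P.card ≤ cutE (Res G I) P := by nlinarith
  rcases Nat.lt_or_ge P.card ρ with hlt | hge
  · obtain ⟨a, ha⟩ := Nat.exists_eq_add_of_lt hlt
    obtain ⟨p', hp'⟩ := Nat.exists_eq_add_of_lt h0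
    rw [ha] at h4 ⊢
    rw [hp'] at h4 ⊢
    nlinarith [Nat.zero_le (p' * a)]
  · omega

open Classical in
lemma closed_compl {V : Type*} [Fintype V] {X : SimpleGraph V} {A : Finset V}
    (h : Closed X A) : Closed X Aᶜ := by
  intro u hu v hv hadj
  exact h v (by simpa using hv) u (by simpa using hu) hadj.symm

open Classical in
/-- First use of the Tutte theorem. -/
lemma step_one {V : Type*} [Fintype V] {G : SimpleGraph V} {k : ℕ} (h : Spec G k)
    (heven : Even (Fintype.card V)) (d : ℕ)
    (hreg : ∀ v, (Finset.univ.filter (fun w => G.Adj v w)).card = d)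
    (hkd : k < d)
    {I : Finset (V → V)} (hI : Cfg G I) (hk : I.card = k) :
    (∃ g : V → V, ∀ v, (Res G I).Adj v (g v) ∧ g (g v) = v) ∨
    ∃ A : Finset V, A.Nonempty ∧ (∃ v, v ∉ A) ∧ Closed (Res G I) A := by
  have hr : ∀ v, (Finset.univ.filter (fun w => (Res G I).Adj v w)).card = d - k := by
    intro v
    have := res_deg hI d hreg v
    omega
  by_cases hno : ∃ M : (Res G I).Subgraph, M.IsPerfectMatching
  · obtain ⟨M, hM⟩ := hno
    exact Or.inl (pm_involution _ M hM)
  · push Not at hno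
    right
    obtain ⟨Q, h1, h2, h3⟩ := tutte_partition (Res G I) (Res G I) heven (d - k) 0
      hr (by simp) (by omega)
      (fun P hP hP3 => res_small h hI hk.le (d - k) hr P hP hP3) hno
    obtain ⟨v, hv⟩ := h2
    exact ⟨Q, h1, ⟨v, by simpa using hv⟩, h3⟩

open Classical in
lemma parts {V : Type*} [Fintype V] (A Q : Finset V)
    (hA : Fintype.card V < 3 * A.card) (hA' : Fintype.card V < 3 * Aᶜ.card)
    (hQ : Fintype.card V < 3 * Q.card) (hQ' : Fintype.card V < 3 * Qᶜ.card)
    (h : ∀ B C, (B = A ∨ B = Aᶜ) → (C = Q ∨ C = Qᶜ) → (B ∩ C).Nonempty →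
      Fintype.card V ≤ 3 * (B ∩ C).card) (u v : V) (hu : u ∈ A) (hv : v ∉ A) :
    u ∈ Q ↔ v ∉ Q := by
  have key : ∀ B C, (B = A ∨ B = Aᶜ) → (C = Q ∨ C = Qᶜ) → (B ∩ C).card = 0 ∨
      Fintype.card V ≤ 3 * (B ∩ C).card := by
    intro B C hB hC
    rcases (B ∩ C).eq_empty_or_nonempty with he | hne
    · left; rw [he]; rfl
    · right; exact h B C hB hC hne
  have k1 := key A Q (Or.inl rfl) (Or.inl rfl)
  have k2 := key A Qᶜ (Or.inl rfl) (Or.inr rfl)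
  have k3 := key Aᶜ Q (Or.inr rfl) (Or.inl rfl)
  have k4 := key Aᶜ Qᶜ (Or.inr rfl) (Or.inr rfl)
  have spl : ∀ B C : Finset V, (B ∩ C).card + (B ∩ Cᶜ).card = B.card := by
    intro B C
    rw [← Finset.sdiff_eq_inter_compl]
    exact Finset.card_inter_add_card_sdiff B C
  have s1 := spl A Q
  have s2 := spl Aᶜ Q
  have s3 := spl Q A
  have s4 := spl Qᶜ A
  have s5 := Finset.card_add_card_compl A
  rw [Finset.inter_comm Q A, Finset.inter_comm Q Aᶜ] at s3
  rw [Finset.inter_comm Qᶜ A, Finset.inter_comm Qᶜ Aᶜ] at s4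
  have hz : ((A ∩ Q).card = 0 ∧ (Aᶜ ∩ Qᶜ).card = 0) ∨
      ((A ∩ Qᶜ).card = 0 ∧ (Aᶜ ∩ Q).card = 0) := by omega
  simp only [Finset.card_eq_zero, Finset.eq_empty_iff_forall_notMem, Finset.mem_inter,
    Finset.mem_compl] at hz
  rcases hz with ⟨z1, z2⟩ | ⟨z1, z2⟩
  · have := z1 u; have := z2 v; tauto
  · have := z1 u; have := z2 v; tauto

lemma cfg_insert {V : Type*} [DecidableEq (V → V)] {G : SimpleGraph V} {I : Finset (V → V)} (hV : Nonempty V)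
    (hI : Cfg G I) (g : V → V) (hg : ∀ v, (Res G I).Adj v (g v) ∧ g (g v) = v) :
    Cfg G (insert g I) ∧ (insert g I).card = I.card + 1 := by
  have hne : ∀ f ∈ I, ∀ v, f v ≠ g v := fun f hf v => ((hg v).1.2 f hf).1
  refine ⟨⟨?_, ?_⟩, ?_⟩
  · intro f hf v
    rcases Finset.mem_insert.1 hf with rfl | hf
    · exact ⟨(hg v).1.1, (hg v).2⟩
    · exact hI.1 f hf v
  · intro f hf f' hf' hff v
    rcases Finset.mem_insert.1 hf with h1 | h1 <;> rcases Finset.mem_insert.1 hf' with h2 | h2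
    · exact absurd (h1.trans h2.symm) hff
    · rw [h1]; exact (hne f' h2 v).symm
    · rw [h2]; exact hne f h1 v
    · exact hI.2 f h1 f' h2 hff v
  · apply Finset.card_insert_of_notMem
    intro h
    exact hne g h hV.some rfl

lemma cfg_erase {V : Type*} [DecidableEq (V → V)] {G : SimpleGraph V} {I : Finset (V → V)}
    (hI : Cfg G I) (f : V → V) : Cfg G (I.erase f) :=
  ⟨fun g hg => hI.1 g (Finset.mem_of_mem_erase hg), fun g hg g' hg' =>
    hI.2 g (Finset.mem_of_mem_erase hg) g' (Finset.mem_of_mem_erase hg')⟩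

open Classical in
/-- A set closed in the residual graph is large. -/
lemma closed_large {V : Type*} [Fintype V] {G : SimpleGraph V} {k : ℕ} (h : Spec G k)
    {I : Finset (V → V)} (hI : Cfg G I) (hk : I.card = k) (P : Finset V) (hP : P.Nonempty)
    (hcl : Closed (Res G I) P) : Fintype.card V < 3 * P.card := by
  by_contra hlt
  have h1 := spec_weak h P hP (by omega)
  have h2 := cut_le_of_cover G I P (by
    intro u hu v hv hadj
    by_contra hno
    push Not at hno
    exact hcl u hu v hv ((res_adj hI u v).2 ⟨hadj, hno⟩))
  have h0 : 0 < P.card := hP.card_pos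
  rw [hk] at h2
  nlinarith

open Classical in
lemma exists_two_cross {V : Type*} [Fintype V] {G : SimpleGraph V} {k : ℕ} (h : Spec G k)
    {I : Finset (V → V)} (hI : Cfg G I) (hk : I.card = k) (hn : 3 ≤ Fintype.card V)
    (A : Finset V) (hA : A.Nonempty) (hA' : Aᶜ.Nonempty) (hcl : Closed (Res G I) A) :
    ∃ f ∈ I, ∃ u₁ ∈ A, ∃ u₂ ∈ A, u₁ ≠ u₂ ∧ f u₁ ∉ A ∧ f u₂ ∉ A := by
  by_contra hno
  push Not at hno
  have h1 : cutE G A ≤ ∑ f ∈ I, (A.filter (fun u => f u ∉ A)).card := by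
    have e : ∑ f ∈ I, (A.filter (fun u => f u ∉ A)).card =
        ∑ u ∈ A, (I.filter (fun f => f u ∉ A)).card := by
      simp only [Finset.card_filter]
      exact Finset.sum_comm
    rw [e]
    refine Finset.sum_le_sum fun u hu => ?_
    refine le_trans (Finset.card_le_card ?_)
      (Finset.card_image_le (s := I.filter (fun f => f u ∉ A)) (f := fun f => f u))
    intro v hv
    simp only [Finset.mem_filter, Finset.mem_univ, true_and] at hv
    by_contra hv2
    refine hcl u hu v hv.1 ((res_adj hI u v).2 ⟨hv.2, fun f hf hfu => hv2 ?_⟩)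
    exact Finset.mem_image.2 ⟨f, Finset.mem_filter.2 ⟨hf, by rw [hfu]; exact hv.1⟩, hfu⟩
  have h2 : ∑ f ∈ I, (A.filter (fun u => f u ∉ A)).card ≤ I.card • 1 := by
    refine Finset.sum_le_card_nsmul _ _ _ fun f hf => ?_
    rw [Finset.card_le_one]
    intro u₁ h₁ u₂ h₂
    rw [Finset.mem_filter] at h₁ h₂
    by_contra hne
    exact h₂.2 (hno f hf u₁ h₁.1 u₂ h₂.1 hne h₁.2)
  rw [smul_eq_mul, mul_one, hk] at h2
  have h3 : cutE G A ≤ k := h1.trans h2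
  have h4 := h A
  have h5 := Finset.card_add_card_compl A
  have h6 := hA.card_pos
  have h7 := hA'.card_pos
  rw [← h5, Nat.add_sub_cancel_left] at h4
  rw [← h5] at hn
  generalize A.card = a at *
  generalize Aᶜ.card = b at *
  obtain ⟨a, rfl⟩ := Nat.exists_eq_add_of_lt h6
  obtain ⟨b, rfl⟩ := Nat.exists_eq_add_of_lt h7
  have h8 : 2 * (0 + a + 1 + (0 + b + 1)) * cutE G A ≤ 2 * (0 + a + 1 + (0 + b + 1)) * k :=
    Nat.mul_le_mul_left _ h3
  have h9 : 2 * (0 + a + 1 + (0 + b + 1)) ≤ 3 * ((0 + a + 1) * (0 + b + 1)) := by nlinarith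
  have h10 := Nat.mul_le_mul_left (k + 1) h9
  nlinarith

open Classical in
/-- Extending a family of `k` edge-disjoint perfect matchings. -/
lemma main_step {V : Type*} [Fintype V] {G : SimpleGraph V} {k : ℕ} (h : Spec G k)
    (heven : Even (Fintype.card V)) (hn : 3 ≤ Fintype.card V) (d : ℕ)
    (hreg : ∀ v, (Finset.univ.filter (fun w => G.Adj v w)).card = d)
    {I : Finset (V → V)} (hI : Cfg G I) (hk : I.card = k) :
    ∃ J : Finset (V → V), Cfg G J ∧ J.card = k + 1 := by
  have hV : Nonempty V := Fintype.card_pos_iff.1 (by omega)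
  have hkd : k < d := by
    have h1 := spec_weak h {hV.some} (by simp) (by simpa using hn)
    have h2 : cutE G {hV.some} ≤ d := by
      rw [← hreg hV.some]
      simp only [cutE, Finset.sum_singleton]
      exact Finset.card_le_card (fun v hv => by
        simp only [Finset.mem_filter, Finset.mem_univ, true_and] at hv ⊢; exact hv.2)
    simp at h1
    omega
  by_cases hkd2 : d = k + 1
  · have hr : ∀ v, (Finset.univ.filter (fun w => (Res G I).Adj v w)).card = 1 := by
      intro v
      have := res_deg hI d hreg v
      omega
    have hr' : ∀ v, ∃ w, ∀ w', (Res G I).Adj v w' ↔ w' = w := by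
      intro v
      obtain ⟨w, hw⟩ := Finset.card_eq_one.1 (hr v)
      refine ⟨w, fun w' => ?_⟩
      have := Finset.ext_iff.1 hw w'
      simpa using this
    choose g hg using hr'
    have := cfg_insert hV hI g (fun v => ⟨(hg v _).2 rfl,
      ((hg (g v) v).1 ((hg v (g v)).2 rfl).symm).symm⟩)
    exact ⟨_, this.1, by rw [this.2, hk]⟩
  rcases step_one h heven d hreg hkd hI hk with ⟨g, hg⟩ | ⟨A, hA, ⟨w, hw⟩, hcl⟩
  · have := cfg_insert hV hI g hg
    exact ⟨_, this.1, by rw [this.2, hk]⟩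
  have hA' : Aᶜ.Nonempty := ⟨w, by simpa using hw⟩
  have hcl' := closed_compl hcl
  have hAl := closed_large h hI hk A hA hcl
  have hAl' := closed_large h hI hk Aᶜ hA' hcl'
  have hclAll : ∀ B, (B = A ∨ B = Aᶜ) → Closed (Res G I) B := by
    rintro B (rfl | rfl)
    · exact hcl
    · exact hcl'
  obtain ⟨f, hf, u₁, hu₁, u₂, hu₂, hne, hf₁, hf₂⟩ :=
    exists_two_cross h hI hk hn A hA hA' hcl
  have hI0 := cfg_erase hI f
  have hI0k : (I.erase f).card + 1 = k := by rw [Finset.card_erase_add_one hf, hk]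
  have hff : ∀ v, f (f v) = v := fun v => (hI.1 f hf v).2
  have hfY : ∀ v, (Res G (I.erase f)).Adj v (f v) := by
    intro v
    refine (res_adj hI0 v (f v)).2 ⟨(hI.1 f hf v).1, fun f' hf' => ?_⟩
    exact hI.2 f' (Finset.mem_of_mem_erase hf') f hf (Finset.ne_of_mem_erase hf') v
  have hY : ∀ v, (Finset.univ.filter (fun w => (Res G (I.erase f)).Adj v w)).card
      = d - k + 1 := by
    intro v
    have := res_deg hI0 d hreg v
    omega
  let X : SimpleGraph V := (Res G (I.erase f)).deleteEdges {s(u₁, f u₁)}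
  have hXadj : ∀ u v, X.Adj u v ↔ (Res G (I.erase f)).Adj u v ∧ s(u, v) ≠ s(u₁, f u₁) := by
    intro u v
    simp only [X, SimpleGraph.deleteEdges_adj, Set.mem_singleton_iff, ne_eq]
  have hHX : ∀ u v, (Res G I).Adj u v → X.Adj u v := by
    intro u v huv
    rw [hXadj]
    refine ⟨⟨huv.1, fun f' hf' => huv.2 f' (Finset.mem_of_mem_erase hf')⟩, ?_⟩
    intro he
    rcases Sym2.eq_iff.1 he with ⟨rfl, rfl⟩ | ⟨rfl, rfl⟩
    · exact (huv.2 f hf).1 rfl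
    · exact (huv.2 f hf).2 rfl
  have hX2 : X.Adj u₂ (f u₂) := by
    rw [hXadj]
    refine ⟨hfY u₂, fun he => ?_⟩
    rcases Sym2.eq_iff.1 he with ⟨h1, h2⟩ | ⟨h1, h2⟩
    · exact hne h1.symm
    · exact hf₁ (h1 ▸ hu₂)
  have hpm : ∃ M : X.Subgraph, M.IsPerfectMatching := by
    by_contra hno
    push Not at hno
    obtain ⟨Q, hQ, hQ', hQcl⟩ := tutte_partition X (Res G (I.erase f)) heven (d - k + 1) 2 hY
      (by
        have hle : ∀ u, (Finset.univ.filter (fun v => (Res G (I.erase f)).Adj u v ∧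
            ¬ X.Adj u v)).card ≤ if u ∈ ({u₁, f u₁} : Finset V) then 1 else 0 := by
          intro u
          split_ifs with hu
          · rw [Finset.card_le_one]
            intro a ha b hb
            simp only [Finset.mem_filter, Finset.mem_univ, true_and, hXadj, not_and, not_not]
              at ha hb
            have := (ha.2 ha.1).trans (hb.2 hb.1).symm
            rcases Sym2.eq_iff.1 this with ⟨-, h2⟩ | ⟨h1, h2⟩
            · exact h2
            · exact h2.trans h1
          · rw [Nat.le_zero, Finset.card_eq_zero, Finset.eq_empty_iff_forall_notMem]
            intro a ha
            simp only [Finset.mem_filter, Finset.mem_univ, true_and, hXadj, not_and, not_not]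
              at ha
            have := Sym2.eq_iff.1 (ha.2 ha.1)
            simp only [Finset.mem_insert, Finset.mem_singleton] at hu
            tauto
        refine (Finset.sum_le_sum
          (g := fun u => if u ∈ ({u₁, f u₁} : Finset V) then 1 else 0) fun u _ => ?_).trans ?_
        · refine le_trans (le_of_eq ?_) (hle u)
          congr
        rw [Finset.sum_ite_mem]
        simpa using Finset.card_le_two)
      (by omega)
      (fun P hP hP3 => res_small h hI0 (by omega) _ hY P hP hP3) hno
    have hQH : Closed (Res G I) Q := fun u hu v hv hadj => hQcl u hu v hv (hHX u v hadj)
    have hQH' := closed_compl hQH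
    have hQAll : ∀ B, (B = Q ∨ B = Qᶜ) → Closed (Res G I) B := by
      rintro B (rfl | rfl)
      · exact hQH
      · exact hQH'
    have hp := parts A Q hAl hAl' (closed_large h hI hk Q hQ hQH)
      (closed_large h hI hk Qᶜ hQ' hQH') (by
        intro B C hB hC hBC
        refine (closed_large h hI hk _ hBC ?_).le
        intro u hu v hv hadj
        rw [Finset.mem_inter] at hu hv
        by_cases hvB : v ∈ B
        · exact hQAll C hC u hu.2 v (fun hvC => hv ⟨hvB, hvC⟩) hadj
        · exact hclAll B hB u hu.1 v hvB hadj) u₂ (f u₂) hu₂ hf₂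
    by_cases hq : u₂ ∈ Q
    · exact hQcl u₂ hq _ (hp.1 hq) hX2
    · have : f u₂ ∈ Q := by
        by_contra h'
        exact hq (hp.2 h')
      exact hQcl _ this u₂ hq hX2.symm
  obtain ⟨M, hM⟩ := hpm
  obtain ⟨g, hg⟩ := pm_involution X M hM
  have hgY : ∀ v, (Res G (I.erase f)).Adj v (g v) ∧ g (g v) = v :=
    fun v => ⟨((hXadj _ _).1 (hg v).1).1, (hg v).2⟩
  obtain ⟨hJ, hJk⟩ := cfg_insert hV hI0 g hgY
  rw [hI0k] at hJk
  have hg₁ : g u₁ ≠ f u₁ := by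
    intro he
    have := ((hXadj _ _).1 (hg u₁).1).2
    rw [he] at this
    exact this rfl
  rcases step_one h heven d hreg hkd hJ hJk with ⟨g', hg'⟩ | ⟨Q, hQ, ⟨w', hw'⟩, hQcl⟩
  · have := cfg_insert hV hJ g' hg'
    exact ⟨_, this.1, by rw [this.2, hJk]⟩
  exfalso
  have hQ' : Qᶜ.Nonempty := ⟨w', by simpa using hw'⟩
  have hQcl' := closed_compl hQcl
  have hQAll : ∀ B, (B = Q ∨ B = Qᶜ) → Closed (Res G (insert g (I.erase f))) B := by
    rintro B (rfl | rfl)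
    · exact hQcl
    · exact hQcl'
  have hadj1 : (Res G (insert g (I.erase f))).Adj u₁ (f u₁) := by
    refine (res_adj hJ _ _).2 ⟨(hI.1 f hf u₁).1, fun f' hf' => ?_⟩
    rcases Finset.mem_insert.1 hf' with rfl | hf'
    · exact hg₁
    · exact ((res_adj hI0 _ _).1 (hfY u₁)).2 f' hf'
  have hp := parts A Q hAl hAl' (closed_large h hJ hJk Q hQ hQcl)
    (closed_large h hJ hJk Qᶜ hQ' hQcl') (by
      intro B C hB hC hBC
      by_contra hlt
      have h1 := spec_strict h (B ∩ C) hBC (by omega)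
      have h2 := cut_le_of_cover G (insert g I) (B ∩ C) (by
        intro u hu v hv hadj
        rw [Finset.mem_inter] at hu hv
        by_contra hno
        push Not at hno
        by_cases hvB : v ∈ B
        · refine hQAll C hC u hu.2 v (fun hvC => hv ⟨hvB, hvC⟩)
            ((res_adj hJ _ _).2 ⟨hadj, fun f' hf' => hno f' ?_⟩)
          exact Finset.insert_subset_insert g (Finset.erase_subset f I) hf'
        · exact hclAll B hB u hu.1 v hvB
            ((res_adj hI _ _).2 ⟨hadj, fun f' hf' => hno f' (Finset.mem_insert_of_mem hf')⟩))
      have h3 : (insert g I).card ≤ k + 1 := by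
        rw [← hk]; exact Finset.card_insert_le _ _
      have h4 := Nat.mul_le_mul_right (B ∩ C).card h3
      omega) u₁ (f u₁) hu₁ hf₁
  by_cases hq : u₁ ∈ Q
  · exact hQcl u₁ hq _ (hp.1 hq) hadj1
  · have : f u₁ ∈ Q := by
      by_contra h'
      exact hq (hp.2 h')
    exact hQcl _ this u₁ hq hadj1.symm

/-- **Theorem (edge-disjoint perfect matchings).**
Let `G` be a connected `d`-regular graph of even order, where `d ≥ 3`. Then `G` contains
`⌊(2/3)·(d - λ₂(G))⌋` pairwise edge-disjoint perfect matchings. -/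
theorem edge_disjoint_perfect_matchings {V : Type*} [Fintype V] (G : SimpleGraph V)
    [DecidableRel G.Adj] (d : ℕ) (hd : 3 ≤ d) (hconn : G.Connected)
    (hreg : G.IsRegularOfDegree d) (heven : Even (Fintype.card V)) :
    ∃ M : Fin ⌊(2 / 3 : ℝ) * ((d : ℝ) - lambda2 G)⌋₊ → G.Subgraph,
      (∀ i, (M i).IsPerfectMatching) ∧
        ∀ i j, i ≠ j → Disjoint (M i).edgeSet (M j).edgeSet := by
  classical
  have hreg' : ∀ v, (Finset.univ.filter (fun w => G.Adj v w)).card = d := by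
    intro v
    rw [← hreg v, ← SimpleGraph.card_neighborFinset_eq_degree]
    congr 1
    ext w
    simp
  have hn : 3 ≤ Fintype.card V := by
    obtain ⟨v⟩ := hconn.nonempty
    rw [← hreg' v] at hd
    exact hd.trans (Finset.card_le_univ _)
  set K := ⌊(2 / 3 : ℝ) * ((d : ℝ) - lambda2 G)⌋₊ with hK
  have hspec : ∀ k, k < K → Spec G k := by
    intro k hk P
    have hle : ((k + 1 : ℕ) : ℝ) ≤ (2 / 3 : ℝ) * ((d : ℝ) - lambda2 G) :=
      (Nat.le_floor_iff' (by omega)).1 hk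
    have hcb := cut_bound G d (fun v => by convert hreg' v) (by omega) P
    have hpn := P.card_le_univ
    have hpos : (0 : ℝ) ≤ P.card * (Fintype.card V - P.card) := by
      have : (P.card : ℝ) ≤ Fintype.card V := by exact_mod_cast hpn
      apply mul_nonneg <;> [positivity; linarith]
    rw [← Nat.cast_le (α := ℝ)]
    push_cast [Nat.cast_sub hpn]
    push_cast at hle
    nlinarith
  have hex : ∀ k, k ≤ K → ∃ I : Finset (V → V), Cfg G I ∧ I.card = k := by
    intro k
    induction k with
    | zero => exact fun _ => ⟨∅, ⟨by simp, by simp⟩, rfl⟩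
    | succ k ih =>
      intro hk
      obtain ⟨I, hI, hIk⟩ := ih (by omega)
      exact main_step (hspec k (by omega)) heven hn d (fun v => by convert hreg' v) hI hIk
  obtain ⟨I, hI, hIK⟩ := hex K le_rfl
  let e : Fin K ≃ I := (finCongr hIK.symm).trans I.equivFin.symm
  refine ⟨fun i =>
    { verts := Set.univ
      Adj := fun u v => (e i).1 u = v
      adj_sub := fun {u v} h => h ▸ (hI.1 _ (e i).2 u).1
      edge_vert := fun _ => Set.mem_univ _
      symm := ⟨fun u v h => by rw [← h]; exact (hI.1 _ (e i).2 u).2⟩ }, ?_, ?_⟩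
  · intro i
    rw [SimpleGraph.Subgraph.isPerfectMatching_iff]
    intro v
    exact ⟨(e i).1 v, rfl, fun w h => Eq.symm h⟩
  · intro i j hij
    rw [Set.disjoint_left]
    intro x
    induction x with
    | _ u v =>
      intro h1 h2
      rw [SimpleGraph.Subgraph.mem_edgeSet] at h1 h2
      have hne : (e i).1 ≠ (e j).1 := fun h => hij (e.injective (Subtype.ext h))
      exact hI.2 _ (e i).2 _ (e j).2 hne u (Eq.trans h1 (Eq.symm h2))
end

section
/- Let G be a connected d-regular graph with d ≥ 3, and let λ₂(G) be the second largest eigenvalue of its adjacency matrix. If λ₂(G) ≤ d − 3, then G is d-edge-connected. -/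
open Finset in
/-- If all but at most one eigenvalue is at most `c`, any two-parameter family of vectors contains a
nonzero parameter whose Rayleigh quotient is at most `c`. -/
lemma exists_rayleigh_le {V : Type*} [Fintype V] [DecidableEq V] (A : Matrix V V ℝ)
    (hA : A.IsHermitian) (c : ℝ)
    (h1 : ∀ i j, c < hA.eigenvalues i → c < hA.eigenvalues j → i = j) (p q : V → ℝ) :
    ∃ α β : ℝ, (α ≠ 0 ∨ β ≠ 0) ∧
      ∑ u, ∑ v, A u v * (α * p u + β * q u) * (α * p v + β * q v)
        ≤ c * ∑ u, (α * p u + β * q u) ^ 2 := by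
  have key : ∀ x : V → ℝ,
      (∀ i, c < hA.eigenvalues i → inner ℝ (hA.eigenvectorBasis i) (WithLp.toLp 2 x) = 0) →
      ∑ u, ∑ v, A u v * x u * x v ≤ c * ∑ u, (x u) ^ 2 := by
    intro x hx
    set X : EuclideanSpace ℝ V := WithLp.toLp 2 x with hX
    set Y : EuclideanSpace ℝ V := WithLp.toLp 2 (A.mulVec x) with hY
    have e1 : inner ℝ X Y = ∑ u, ∑ v, A u v * x u * x v := by
      simp only [hX, hY, EuclideanSpace.inner_eq_star_dotProduct, Matrix.mulVec, dotProduct,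
        Finset.sum_mul, Pi.star_apply, star_trivial]
      refine sum_congr rfl fun u _ => sum_congr rfl fun v _ => ?_
      ring
    have e2 : inner ℝ X X = ∑ u, (x u) ^ 2 := by
      simp only [hX, EuclideanSpace.inner_eq_star_dotProduct, dotProduct, Pi.star_apply,
        star_trivial]
      refine sum_congr rfl fun u _ => ?_
      ring
    have e3 : ∀ i, inner ℝ (hA.eigenvectorBasis i) Y
        = hA.eigenvalues i * inner ℝ (hA.eigenvectorBasis i) X := by
      intro i
      have h := hA.mulVec_eigenvectorBasis i
      have hs : A.transpose = A := by
        have := hA.eq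
        rwa [Matrix.conjTranspose_eq_transpose_of_trivial] at this
      have a1 : inner ℝ (hA.eigenvectorBasis i) Y
          = A.mulVec x ⬝ᵥ (hA.eigenvectorBasis i).ofLp := by
        simp [hY, EuclideanSpace.inner_eq_star_dotProduct]
      have a2 : inner ℝ (hA.eigenvectorBasis i) X
          = x ⬝ᵥ (hA.eigenvectorBasis i).ofLp := by
        simp [hX, EuclideanSpace.inner_eq_star_dotProduct]
      rw [a1, a2, dotProduct_comm, Matrix.dotProduct_mulVec, ← Matrix.mulVec_transpose, hs, h,
        smul_dotProduct, dotProduct_comm, smul_eq_mul]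
    rw [← e1, ← e2, ← hA.eigenvectorBasis.sum_inner_mul_inner X Y,
      ← hA.eigenvectorBasis.sum_inner_mul_inner X X, mul_sum]
    refine sum_le_sum fun i _ => ?_
    rw [e3, real_inner_comm]
    by_cases hi : c < hA.eigenvalues i
    · rw [hx i hi]; simp
    · push Not at hi
      nlinarith [mul_self_nonneg (inner ℝ (hA.eigenvectorBasis i) X)]
  by_cases hex : ∃ i, c < hA.eigenvalues i
  · obtain ⟨i, hi⟩ := hex
    set P := inner ℝ (hA.eigenvectorBasis i) (WithLp.toLp 2 p) with hP
    set Q := inner ℝ (hA.eigenvectorBasis i) (WithLp.toLp 2 q) with hQ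
    have lin : ∀ α β : ℝ, inner ℝ (hA.eigenvectorBasis i)
        (WithLp.toLp 2 (fun u => α * p u + β * q u)) = α * P + β * Q := by
      intro α β
      have : (WithLp.toLp 2 (fun u => α * p u + β * q u) : EuclideanSpace ℝ V)
          = α • WithLp.toLp 2 p + β • WithLp.toLp 2 q := by
        ext u; simp
      rw [this, inner_add_right, inner_smul_right, inner_smul_right]
    by_cases hPQ : P = 0
    · refine ⟨1, 0, Or.inl one_ne_zero, key _ fun j hj => ?_⟩
      rw [← h1 i j hi hj, lin, hPQ]; ring
    · refine ⟨-Q, P, Or.inr hPQ, key _ fun j hj => ?_⟩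
      rw [← h1 i j hi hj, lin]; ring
  · push Not at hex
    exact ⟨1, 0, Or.inl one_ne_zero, key _ fun j hj => absurd hj (not_lt.2 (hex j))⟩

open Classical in
/-- The bound on `lambda2` says at most one eigenvalue exceeds `c`. -/
lemma unique_of_lambda2_le {V : Type*} [Fintype V] (G : SimpleGraph V) (c : ℝ)
    (h2 : 2 ≤ Fintype.card V) (hl : lambda2 G ≤ c) (i j : V)
    (hi : c < (adjMatrix_isHermitian G).eigenvalues i)
    (hj : c < (adjMatrix_isHermitian G).eigenvalues j) : i = j := by
  unfold lambda2 at hl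
  set L := (adjEigenvalues G).sort (· ≤ ·) with hL
  have hlen : L.length = Fintype.card V := by
    simp [hL, adjEigenvalues]
  have hsort : L.Pairwise (· ≤ ·) := Multiset.pairwise_sort _ _
  have hlt : Fintype.card V - 2 < L.length := by omega
  rw [List.getD_eq_getElem _ _ hlt] at hl
  have hcount : L.countP (fun x => decide (c < x)) ≤ 1 := by
    rw [← List.take_append_drop (Fintype.card V - 1) L, List.countP_append]
    have z : (L.take (Fintype.card V - 1)).countP (fun x => decide (c < x)) = 0 := by
      rw [List.countP_eq_zero]
      intro a ha
      obtain ⟨m, hm, rfl⟩ := List.mem_take_iff_getElem.1 ha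
      have : L[m] ≤ L[Fintype.card V - 2] := by
        rcases (show m < Fintype.card V - 2 ∨ m = Fintype.card V - 2 by omega) with h | h
        · exact List.pairwise_iff_getElem.1 hsort _ _ _ _ h
        · subst h; exact le_rfl
      simpa using this.trans hl
    have y := List.countP_le_length (p := fun x => decide (c < x)) (l := L.drop (Fintype.card V - 1))
    rw [List.length_drop] at y
    omega
  have hc2 : (adjEigenvalues G).countP (fun x => c < x) ≤ 1 := by
    rw [← Multiset.sort_eq (adjEigenvalues G) (· ≤ ·), Multiset.coe_countP]
    exact hcount
  unfold adjEigenvalues at hc2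
  rw [Multiset.countP_map] at hc2
  have : (Finset.univ.filter fun a => c < (adjMatrix_isHermitian G).eigenvalues a).card ≤ 1 := hc2
  exact Finset.card_le_one.1 this i (by simpa using hi) j (by simpa using hj)

open Classical Finset in
/-- A side of a cut with fewer than `d` edges has more vertices than the cut has edges. -/
lemma cut_lt_card {V : Type*} [Fintype V] (G : SimpleGraph V) (d : ℕ)
    (hreg : ∀ u, (univ.filter fun v => G.Adj u v).card = d) (S : Finset V) (hS : S.Nonempty)
    (hk : ∑ u ∈ S, (univ.filter fun v => G.Adj u v ∧ v ∉ S).card < d) : d < S.card := by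
  by_contra hcon
  push Not at hcon
  have h1 : ∀ u ∈ S, d + 1 - S.card ≤ (univ.filter fun v => G.Adj u v ∧ v ∉ S).card := by
    intro u hu
    have hsub : (univ.filter fun v => G.Adj u v) ⊆
        (univ.filter fun v => G.Adj u v ∧ v ∉ S) ∪ S.erase u := by
      intro v hv
      simp only [mem_filter, mem_univ, true_and, mem_union, mem_erase] at hv ⊢
      by_cases hvS : v ∈ S
      · exact Or.inr ⟨fun h => G.loopless.irrefl u (h ▸ hv), hvS⟩
      · exact Or.inl ⟨hv, hvS⟩
    have h2 := (card_le_card hsub).trans (card_union_le _ _)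
    rw [hreg, card_erase_of_mem hu] at h2
    have := card_pos.2 hS
    omega
  have h2 := card_nsmul_le_sum S _ _ h1
  rw [smul_eq_mul] at h2
  have h3 := card_pos.2 hS
  obtain ⟨t, ht⟩ := Nat.exists_eq_add_of_le hcon
  have : d + 1 - S.card = t + 1 := by omega
  rw [this] at h2
  nlinarith

open Classical Finset in
/-- The number of cut edges is at most the size of an edge set separating `S`. -/
lemma cut_le_card {V : Type*} [Fintype V] (G : SimpleGraph V) (E : Finset (Sym2 V)) (S : Finset V)
    (h : ∀ u v, G.Adj u v → u ∈ S → v ∉ S → s(u, v) ∈ E) :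
    ∑ u ∈ S, (univ.filter fun v => G.Adj u v ∧ v ∉ S).card ≤ E.card := by
  rw [← card_sigma]
  refine card_le_card_of_injOn (fun x => s(x.1, x.2)) ?_ ?_
  · rintro ⟨u, v⟩ hx
    simp only [coe_sigma, Set.mem_sigma_iff, mem_coe, mem_filter, mem_univ, true_and] at hx
    exact h u v hx.2.1 hx.1 hx.2.2
  · rintro ⟨u, v⟩ hx ⟨u', v'⟩ hy hxy
    simp only [coe_sigma, Set.mem_sigma_iff, mem_coe, mem_filter, mem_univ, true_and] at hx hy
    simp only [Sym2.eq_iff] at hxy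
    rcases hxy with ⟨rfl, rfl⟩ | ⟨rfl, rfl⟩
    · rfl
    · exact absurd hx.1 hy.2.2

open Classical Finset in
/-- The quadratic form on a vector constant on `S` and its complement. -/
lemma quad_cut {V : Type*} [Fintype V] (G : SimpleGraph V) (d : ℕ)
    (hreg : ∀ u, (univ.filter fun v => G.Adj u v).card = d) (S : Finset V) (k k' : ℕ)
    (hk : ∑ u ∈ S, (univ.filter fun v => G.Adj u v ∧ v ∉ S).card = k)
    (hk' : ∑ u ∈ Sᶜ, (univ.filter fun v => G.Adj u v ∧ v ∉ Sᶜ).card = k') (x : V → ℝ) (α β : ℝ)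
    (hx : ∀ u, x u = if u ∈ S then α else β) :
    2 * ∑ u, ∑ v, G.adjMatrix ℝ u v * x u * x v
      = 2 * d * ∑ u, (x u) ^ 2 - (k + k') * (α - β) ^ 2 := by
  have row : ∀ u, ∑ v, G.adjMatrix ℝ u v = d := by
    intro u
    simp only [SimpleGraph.adjMatrix_apply, sum_boole, hreg]
  have hsym : ∀ u v, G.adjMatrix ℝ u v = G.adjMatrix ℝ v u := by
    intro u v; simp [SimpleGraph.adjMatrix_apply, SimpleGraph.adj_comm]
  have s1 : ∑ u, ∑ v, G.adjMatrix ℝ u v * (x u) ^ 2 = d * ∑ u, (x u) ^ 2 := by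
    simp only [← sum_mul, row, mul_sum]
  have s2 : ∑ u, ∑ v, G.adjMatrix ℝ u v * (x v) ^ 2 = d * ∑ u, (x u) ^ 2 := by
    rw [sum_comm, ← s1]
    exact sum_congr rfl fun u _ => sum_congr rfl fun v _ => by rw [hsym]
  have s3 : ∑ u, ∑ v, G.adjMatrix ℝ u v * (x u - x v) ^ 2 = (k + k') * (α - β) ^ 2 := by
    rw [← sum_add_sum_compl S, ← hk, ← hk', add_mul]
    push_cast
    rw [sum_mul, sum_mul]
    congr 1
    · refine sum_congr rfl fun u hu => ?_
      rw [← sum_boole, sum_mul]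
      refine sum_congr rfl fun v _ => ?_
      rw [hx, hx, SimpleGraph.adjMatrix_apply]
      by_cases hv : v ∈ S <;> by_cases ha : G.Adj u v <;> simp [hu, hv, ha]
    · refine sum_congr rfl fun u hu => ?_
      rw [← sum_boole, sum_mul]
      refine sum_congr rfl fun v _ => ?_
      rw [mem_compl] at hu
      rw [hx, hx, SimpleGraph.adjMatrix_apply]
      by_cases hv : v ∈ S <;> by_cases ha : G.Adj u v <;> simp [hu, hv, ha]
      ring
  have s4 : ∑ u, ∑ v, G.adjMatrix ℝ u v * (x u - x v) ^ 2
      = ∑ u, ∑ v, G.adjMatrix ℝ u v * (x u) ^ 2 + ∑ u, ∑ v, G.adjMatrix ℝ u v * (x v) ^ 2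
        - 2 * ∑ u, ∑ v, G.adjMatrix ℝ u v * x u * x v := by
    simp only [mul_sum, ← sum_add_distrib, ← sum_sub_distrib]
    exact sum_congr rfl fun u _ => sum_congr rfl fun v _ => by ring
  linarith

open Classical in
/-- The theorem with all decidability instances classical. -/
lemma d_edge_connected_aux {V : Type*} [Fintype V] (G : SimpleGraph V)
    (d : ℕ) (hd : 3 ≤ d) (hconn : G.Connected)
    (hreg' : ∀ u, (Finset.univ.filter fun v => G.Adj u v).card = d)
    (hl : lambda2 G ≤ (d : ℝ) - 3) :
    ∀ E : Finset (Sym2 V), E.card < d → (G.deleteEdges ↑E).Connected := by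
  intro E hEd
  have := hconn.nonempty
  by_contra hcon
  have hpre : ¬ (G.deleteEdges ↑E).Preconnected := fun h => hcon ⟨h⟩
  unfold SimpleGraph.Preconnected at hpre
  push Not at hpre
  obtain ⟨a, b, hab⟩ := hpre
  set S : Finset V := Finset.univ.filter fun w => (G.deleteEdges ↑E).Reachable a w with hS
  have haS : a ∈ S := by simp [hS]
  have hbS : b ∈ Sᶜ := by simpa [hS] using hab
  have hsep : ∀ u v, G.Adj u v → u ∈ S → v ∉ S → s(u, v) ∈ E := by
    intro u v huv hu hv
    by_contra hE
    simp only [hS, Finset.mem_filter, Finset.mem_univ, true_and] at hu hv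
    refine hv (hu.trans (SimpleGraph.Adj.reachable ?_))
    rw [SimpleGraph.deleteEdges_adj]
    exact ⟨huv, by simpa using hE⟩
  have hsep' : ∀ u v, G.Adj u v → u ∈ Sᶜ → v ∉ Sᶜ → s(u, v) ∈ E := by
    intro u v huv hu hv
    rw [Sym2.eq_swap]
    exact hsep v u huv.symm (by simpa using hv) (by simpa using hu)
  have k1 := cut_le_card G E S hsep
  have k2 := cut_le_card G E Sᶜ hsep'
  have c1 := cut_lt_card G d hreg' S ⟨a, haS⟩ (k1.trans_lt hEd)
  have c2 := cut_lt_card G d hreg' Sᶜ ⟨b, hbS⟩ (k2.trans_lt hEd)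
  have hcard : 2 ≤ Fintype.card V := by
    have := S.card_le_univ
    omega
  obtain ⟨α, β, hne, hle⟩ := exists_rayleigh_le _ (adjMatrix_isHermitian G) ((d : ℝ) - 3)
    (fun i j hi hj => unique_of_lambda2_le G _ hcard hl i j (by convert hi) (by convert hj))
    (fun u => if u ∈ S then 1 else 0) (fun u => if u ∈ S then 0 else 1)
  have hx : ∀ u, (α * (if u ∈ S then (1 : ℝ) else 0) + β * (if u ∈ S then (0 : ℝ) else 1))
      = if u ∈ S then α else β := by
    intro u; split_ifs <;> simp
  have hq := quad_cut G d hreg' S _ _ rfl rfl (fun u => if u ∈ S then α else β) α β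
    (fun u => rfl)
  simp only [hx] at hle
  have hnorm : ∑ u, (if u ∈ S then α else β) ^ 2 = S.card * α ^ 2 + (Sᶜ).card * β ^ 2 := by
    rw [← Finset.sum_add_sum_compl S, Finset.sum_congr rfl (g := fun _ => α ^ 2),
      Finset.sum_congr (s₁ := Sᶜ) rfl (g := fun _ => β ^ 2)]
    · simp
    · intro u hu; rw [if_neg (by simpa using hu)]
    · intro u hu; rw [if_pos hu]
  rw [hnorm] at hq hle
  have hK1 : ((∑ u ∈ S, (Finset.univ.filter fun v => G.Adj u v ∧ v ∉ S).card : ℕ) : ℝ) ≤ d := by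
    exact_mod_cast (k1.trans hEd.le)
  have hK2 : ((∑ u ∈ Sᶜ, (Finset.univ.filter fun v => G.Adj u v ∧ v ∉ Sᶜ).card : ℕ) : ℝ) ≤ d := by
    exact_mod_cast (k2.trans hEd.le)
  have hC1 : (d : ℝ) < S.card := by exact_mod_cast c1
  have hC2 : (d : ℝ) < (Sᶜ).card := by exact_mod_cast c2
  have hd0 : (3 : ℝ) ≤ d := by exact_mod_cast hd
  have hq' : 2 * d * (S.card * α ^ 2 + (Sᶜ).card * β ^ 2) - (d + d) * (α - β) ^ 2
      ≤ 2 * (((d : ℝ) - 3) * (S.card * α ^ 2 + (Sᶜ).card * β ^ 2)) := by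
    have h1 := mul_le_mul_of_nonneg_right (add_le_add hK1 hK2) (sq_nonneg (α - β))
    have h2 : _ ≤ 2 * (((d : ℝ) - 3) * (S.card * α ^ 2 + (Sᶜ).card * β ^ 2)) :=
      mul_le_mul_of_nonneg_left hle (by norm_num : (0 : ℝ) ≤ 2)
    linarith
  have hpos : 0 < α ^ 2 + β ^ 2 := by
    rcases hne with h | h <;> positivity
  have f1 : (d : ℝ) * α ^ 2 ≤ S.card * α ^ 2 :=
    mul_le_mul_of_nonneg_right hC1.le (sq_nonneg _)
  have f2 : (d : ℝ) * β ^ 2 ≤ (Sᶜ).card * β ^ 2 :=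
    mul_le_mul_of_nonneg_right hC2.le (sq_nonneg _)
  have f3 : 0 < (d : ℝ) * (α ^ 2 + β ^ 2) := by positivity
  have f4 : 0 ≤ (d : ℝ) * (α + β) ^ 2 := by positivity
  nlinarith

/-- **Claim (d-edge-connectivity).**
Let `G` be a connected `d`-regular graph with `d ≥ 3`. If `λ₂(G) ≤ d - 3`, then `G` is
`d`-edge-connected: deleting any set of fewer than `d` edges leaves `G` connected. -/
theorem d_edge_connected_of_lambda2 {V : Type*} [Fintype V] (G : SimpleGraph V)
    [DecidableRel G.Adj] (d : ℕ) (hd : 3 ≤ d) (hconn : G.Connected)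
    (hreg : G.IsRegularOfDegree d) (hl : lambda2 G ≤ (d : ℝ) - 3) :
    ∀ E : Finset (Sym2 V), ↑E ⊆ G.edgeSet → E.card < d → (G.deleteEdges ↑E).Connected := by
  classical
  intro E _ hEd
  refine d_edge_connected_aux G d hd hconn (fun u => ?_) hl E hEd
  rw [← hreg u, ← SimpleGraph.card_neighborFinset_eq_degree]
  congr 1
  ext v; simp
end
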